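/- Fix an integer M ≥ 2. For s = 1,…,M and i = 1,…,N, let v_i^{(s)} denote the (i,i)-entry of (B^⊤B)^{−s} and w_i^{(s)} the (i,i)-entry of (BB^⊤)^{−s}. Define g_i^{(r)} by: g_N^{(r)} = 0 for all r ≥ 1; g_i^{(1)} = F_i·v_{i+1}^{(1)} for i = 1,…,N−1; and g_i^{(r)} = F_i·g_{i+1}^{(r)} + B̌_{i+1}·g_i^{(r−1)} + Σ_{k=1}^{r−1} g_{i+1}^{(k)}·g_i^{(r−k)} for i = 1,…,N−1 and r ≥ 2. Define g̃_i^{(r)} by: g̃_1^{(r)} = 0 for all r ≥ 1; g̃_i^{(1)} = F̃_i·w_{i−1}^{(1)} for i = 2,…,N; and g̃_i^{(r)} = F̃_i·g̃_{i−1}^{(r)} + B̌_{i−1}·g̃_i^{(r−1)} + Σ_{k=1}^{r−1} g̃_{i−1}^{(k)}·g̃_i^{(r−k)} for i = 2,…,N and r ≥ 2. Then for every s = 2,…,M: v_N^{(s)} = B̌_N·w_N^{(s−1)}; w_1^{(s)} = B̌_1·v_1^{(s−1)}; v_i^{(s)} = F_i·v_{i+1}^{(s)} + B̌_i·w_i^{(s−1)}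 + 2·Σ_{k=1}^{s−1} g_i^{(k)}·w_i^{(s−k)} for i = 1,…,N−1; and w_i^{(s)} = F̃_i·w_{i−1}^{(s)} + B̌_i·v_i^{(s−1)} + 2·Σ_{k=1}^{s−1} g̃_i^{(k)}·v_i^{(s−k)} for i = 2,…,N. -/

import Mathlib

open Matrix

/-!
The matrices `W s = B (BᵀB)⁻ˢ = (BBᵀ)⁻ˢ B` link the two families of inverse powers. Reading off the
diagonal of `B (W (s + 1))ᵀ = (BBᵀ)⁻ˢ` expresses the `i`-th diagonal entry of `(BBᵀ)⁻ˢ` through two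
diagonal entries of `(BᵀB)⁻⁽ˢ⁺¹⁾` and the superdiagonal entry of `W (s + 1)`, so it remains to
compute that entry. Put `y = (BBᵀ - X)⁻¹ δᵢ` and `z = Bᵀ y`, as vectors of power series. Below row
`i` they satisfy `B z = X y`, and eliminating upwards from the last row gives
`bᵢ zᵢ₊₁ = -qᵢ X Gᵢ yᵢ`, where the series `Gᵢ` solve a continued fraction (Riccati) recurrence.
Coefficient by coefficient this recurrence is the one that defines `g`. The formulas for `(BBᵀ)⁻ˢ`
follow by reversing the order of the rows and columns of `Bᵀ`, which is again upper bidiagonal.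
-/

section Bidiagonal

variable {R : Type*} {N : ℕ}

/-- The entries of `P` as a function on `ℕ × ℕ`, extended by zero. With this convention the
product with an upper bidiagonal matrix has the same formula in the last row as in the others. -/
def zeroExtend [Zero R] (P : Matrix (Fin N) (Fin N) R) (i j : ℕ) : R :=
  if h : i < N ∧ j < N then P ⟨i, h.1⟩ ⟨j, h.2⟩ else 0

lemma zeroExtend_of_lt [Zero R] (P : Matrix (Fin N) (Fin N) R) {i j : ℕ} (hi : i < N)
    (hj : j < N) : zeroExtend P i j = P ⟨i, hi⟩ ⟨j, hj⟩ :=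
  dif_pos ⟨hi, hj⟩

lemma zeroExtend_of_le_left [Zero R] (P : Matrix (Fin N) (Fin N) R) {i : ℕ} (hi : N ≤ i) (j : ℕ) :
    zeroExtend P i j = 0 :=
  dif_neg fun h => hi.not_gt h.1

lemma zeroExtend_transpose [Zero R] (P : Matrix (Fin N) (Fin N) R) (i j : ℕ) :
    zeroExtend Pᵀ i j = zeroExtend P j i := by
  simp only [zeroExtend, and_comm (a := i < N), transpose_apply]

lemma zeroExtend_of_le_right [Zero R] (P : Matrix (Fin N) (Fin N) R) (i : ℕ) {j : ℕ} (hj : N ≤ j) :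
    zeroExtend P i j = 0 := by
  rw [← zeroExtend_transpose, zeroExtend_of_le_left Pᵀ hj]

lemma zeroExtend_mul [NonUnitalNonAssocSemiring R] (P Q : Matrix (Fin N) (Fin N) R) (i j : ℕ) :
    zeroExtend (P * Q) i j = ∑ k ∈ Finset.range N, zeroExtend P i k * zeroExtend Q k j := by
  by_cases hi : i < N
  · by_cases hj : j < N
    · rw [zeroExtend_of_lt _ hi hj, mul_apply,
        ← Fin.sum_univ_eq_sum_range fun k => zeroExtend P i k * zeroExtend Q k j]
      exact Finset.sum_congr rfl fun k _ => by
        rw [zeroExtend_of_lt P hi k.2, zeroExtend_of_lt Q k.2 hj]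
    · simp [zeroExtend_of_le_right _ _ (not_lt.mp hj)]
  · simp [zeroExtend_of_le_left _ (not_lt.mp hi)]

/-- The `N × N` upper bidiagonal matrix with diagonal `a` and superdiagonal `b`. -/
def upperBidiagonal [Zero R] (N : ℕ) (a b : ℕ → R) : Matrix (Fin N) (Fin N) R :=
  Matrix.of fun i j =>
    if (j : ℕ) = (i : ℕ) then a i else if (j : ℕ) = (i : ℕ) + 1 then b i else 0

lemma zeroExtend_upperBidiagonal [AddZeroClass R] (a b : ℕ → R) {i j : ℕ} (hi : i < N)
    (hj : j < N) :
    zeroExtend (upperBidiagonal N a b) i j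
      = (if j = i then a i else 0) + if j = i + 1 then b i else 0 := by
  rw [zeroExtend_of_lt _ hi hj]
  by_cases h : j = i <;> simp [upperBidiagonal, h]

lemma zeroExtend_upperBidiagonal_mul [NonAssocSemiring R] (a b : ℕ → R)
    (P : Matrix (Fin N) (Fin N) R) {i : ℕ} (hi : i < N) (j : ℕ) :
    zeroExtend (upperBidiagonal N a b * P) i j
      = a i * zeroExtend P i j + b i * zeroExtend P (i + 1) j := by
  calc zeroExtend (upperBidiagonal N a b * P) i j
      = ∑ k ∈ Finset.range N, ((if k = i then a i * zeroExtend P k j else 0)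
          + if k = i + 1 then b i * zeroExtend P k j else 0) := by
        rw [zeroExtend_mul]
        refine Finset.sum_congr rfl fun k hk => ?_
        rw [zeroExtend_upperBidiagonal a b hi (Finset.mem_range.mp hk), add_mul, ite_mul, ite_mul,
          zero_mul]
    _ = a i * zeroExtend P i j + b i * zeroExtend P (i + 1) j := by
        rw [Finset.sum_add_distrib, Finset.sum_ite_eq', Finset.sum_ite_eq',
          if_pos (Finset.mem_range.mpr hi), ite_eq_left_iff.mpr fun h => ?_]
        rw [zeroExtend_of_le_left P (by simpa using h), mul_zero]

lemma zeroExtend_transpose_upperBidiagonal_mul [NonAssocSemiring R] (a b : ℕ → R)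
    (P : Matrix (Fin N) (Fin N) R) {i : ℕ} (hi : i + 1 < N) (j : ℕ) :
    zeroExtend ((upperBidiagonal N a b)ᵀ * P) (i + 1) j
      = a (i + 1) * zeroExtend P (i + 1) j + b i * zeroExtend P i j := by
  calc zeroExtend ((upperBidiagonal N a b)ᵀ * P) (i + 1) j
      = ∑ k ∈ Finset.range N, ((if i + 1 = k then a k * zeroExtend P k j else 0)
          + if i = k then b k * zeroExtend P k j else 0) := by
        rw [zeroExtend_mul]
        refine Finset.sum_congr rfl fun k hk => ?_
        rw [zeroExtend_transpose, zeroExtend_upperBidiagonal a b (Finset.mem_range.mp hk) hi,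
          add_mul, ite_mul, ite_mul, zero_mul]
        simp only [add_left_inj]
    _ = a (i + 1) * zeroExtend P (i + 1) j + b i * zeroExtend P i j := by
        rw [Finset.sum_add_distrib, Finset.sum_ite_eq, Finset.sum_ite_eq,
          if_pos (Finset.mem_range.mpr hi), if_pos (Finset.mem_range.mpr (by omega))]

lemma isUpperTriangular_upperBidiagonal [Zero R] (a b : ℕ → R) :
    (upperBidiagonal N a b).IsUpperTriangular := by
  intro i j hij
  have : (j : ℕ) < i := hij
  simp [upperBidiagonal, this.ne, show (j : ℕ) ≠ i + 1 by omega]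

lemma transpose_upperBidiagonal_submatrix_rev [Zero R] (a b : ℕ → R) :
    (upperBidiagonal N a b)ᵀ.submatrix Fin.revPerm Fin.revPerm
      = upperBidiagonal N (fun i => a (N - (i + 1))) fun i => b (N - (i + 2)) := by
  ext ⟨i, hi⟩ ⟨j, hj⟩
  simp only [upperBidiagonal, submatrix_apply, transpose_apply, of_apply, Fin.revPerm_apply,
    Fin.val_rev]
  by_cases hij : j = i
  · subst hij
    rw [if_pos rfl, if_pos rfl]
  · by_cases hij' : j = i + 1
    · rw [if_neg (by omega), if_pos (by omega), if_neg (by omega), if_pos hij']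
      congr 1
      omega
    · rw [if_neg (by omega), if_neg (by omega), if_neg (by omega), if_neg hij']

lemma isUnit_det_upperBidiagonal [CommRing R] {a : ℕ → R} (ha : ∀ i < N, IsUnit (a i))
    (b : ℕ → R) : IsUnit (upperBidiagonal N a b).det := by
  rw [det_of_isUpperTriangular (isUpperTriangular_upperBidiagonal a b), IsUnit.prod_univ_iff]
  intro i
  simpa [upperBidiagonal] using ha i i.2

end Bidiagonal

section Intertwiner

variable {n R : Type*} [Fintype n] [DecidableEq n] [CommRing R]

/-- The matrix `B (BᵀB)⁻ˢ = (BBᵀ)⁻ˢ B`, which links the inverse powers of the two Gram matrices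
of `B`. -/
noncomputable def intertwiner (B : Matrix n n R) (s : ℕ) : Matrix n n R :=
  B * (Bᵀ * B)⁻¹ ^ s

lemma intertwiner_eq {B : Matrix n n R} (hB : IsUnit B.det) (s : ℕ) :
    intertwiner B s = (B * Bᵀ)⁻¹ ^ s * B := by
  have hsemi : SemiconjBy B (Bᵀ * B)⁻¹ (B * Bᵀ)⁻¹ := by
    rw [SemiconjBy, Matrix.mul_inv_rev, Matrix.mul_inv_rev, mul_nonsing_inv_cancel_left _ _ hB,
      nonsing_inv_mul_cancel_right _ _ hB]
  exact hsemi.pow_right s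

lemma intertwiner_one {B : Matrix n n R} (hB : IsUnit B.det) : intertwiner B 1 = (B⁻¹)ᵀ := by
  rw [intertwiner, pow_one, Matrix.mul_inv_rev, mul_nonsing_inv_cancel_left _ _ hB,
    transpose_nonsing_inv]

lemma transpose_intertwiner {B : Matrix n n R} (hB : IsUnit B.det) (s : ℕ) :
    (intertwiner B s)ᵀ = Bᵀ * (B * Bᵀ)⁻¹ ^ s := by
  rw [intertwiner_eq hB, transpose_mul, ((isSymm_mul_transpose_self B).inv.pow s).eq]

lemma mul_transpose_intertwiner_succ {B : Matrix n n R} (hB : IsUnit B.det) (s : ℕ) :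
    B * (intertwiner B (s + 1))ᵀ = (B * Bᵀ)⁻¹ ^ s := by
  have hBBT : IsUnit (B * Bᵀ).det := by
    rw [det_mul]
    exact hB.mul (isUnit_det_transpose B hB)
  rw [transpose_intertwiner hB, ← mul_assoc, pow_succ', mul_nonsing_inv_cancel_left _ _ hBBT]

end Intertwiner

section GramDiagonal

variable {R : Type*} [CommRing R] {N : ℕ} {a b : ℕ → R}

lemma zeroExtend_intertwiner_one_superdiagonal (hB : IsUnit (upperBidiagonal N a b).det) (i : ℕ) :
    zeroExtend (intertwiner (upperBidiagonal N a b) 1) i (i + 1) = 0 := by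
  by_cases hi : i + 1 < N
  · have := invertibleOfIsUnitDet _ hB
    rw [intertwiner_one hB, zeroExtend_transpose, zeroExtend_of_lt _ hi (by omega)]
    exact blockTriangular_inv_of_blockTriangular (isUpperTriangular_upperBidiagonal a b)
      (Fin.mk_lt_mk.mpr i.lt_succ_self)
  · exact zeroExtend_of_le_right _ _ (not_lt.mp hi)

lemma zeroExtend_inv_pow_diagonal {B : Matrix (Fin N) (Fin N) R} (hBab : B = upperBidiagonal N a b)
    (hB : IsUnit B.det) (s : ℕ) {i : ℕ} (hi : i < N) :
    zeroExtend ((B * Bᵀ)⁻¹ ^ s) i i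
      = a i ^ 2 * zeroExtend ((Bᵀ * B)⁻¹ ^ (s + 1)) i i
        - b i ^ 2 * zeroExtend ((Bᵀ * B)⁻¹ ^ (s + 1)) (i + 1) (i + 1)
        + 2 * (b i * zeroExtend (intertwiner B (s + 1)) i (i + 1)) := by
  set A := (Bᵀ * B)⁻¹ ^ (s + 1) with hA
  have hA_symm : zeroExtend A (i + 1) i = zeroExtend A i (i + 1) := by
    rw [← zeroExtend_transpose, ((isSymm_transpose_mul_self B).inv.pow (s + 1)).eq]
  have hW (j : ℕ) : zeroExtend (intertwiner B (s + 1)) i j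
      = a i * zeroExtend A i j + b i * zeroExtend A (i + 1) j := by
    rw [intertwiner, ← hA, hBab, zeroExtend_upperBidiagonal_mul a b _ hi]
  have hC : zeroExtend ((B * Bᵀ)⁻¹ ^ s) i i
      = a i * zeroExtend (intertwiner B (s + 1)) i i
        + b i * zeroExtend (intertwiner B (s + 1)) i (i + 1) := by
    rw [← mul_transpose_intertwiner_succ hB, ← zeroExtend_transpose (intertwiner B (s + 1)) i i,
      ← zeroExtend_transpose (intertwiner B (s + 1)) (i + 1) i,
      ← zeroExtend_upperBidiagonal_mul a b _ hi, hBab]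
  linear_combination hC + a i * hW i - b i * hW (i + 1) + a i * b i * hA_symm

end GramDiagonal

section Elimination

open PowerSeries

lemma superdiagonal_elimination {R : Type*} [CommRing R] [IsDomain R] {N i : ℕ} {x : R}
    {a b q e y z G : ℕ → R} (haq : ∀ j < N, a j ^ 2 = q j) (hbe : ∀ j, j + 1 < N → b j ^ 2 = e j)
    (hz : ∀ j, j + 1 < N → z (j + 1) = a (j + 1) * y (j + 1) + b j * y j)
    (hy : ∀ j, i ≤ j → j + 1 < N → a (j + 1) * z (j + 1) + b (j + 1) * z (j + 2) = x * y (j + 1))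
    (hz_last : z N = 0) (hG_last : G (N - 1) = 0)
    (hG : ∀ j, j + 1 < N → q j * (G j * (q (j + 1) * (1 - x * G (j + 1)) - x))
      = e j * (q (j + 1) * G (j + 1) + 1))
    (hD : ∀ j, j + 1 < N → q (j + 1) * (1 - x * G (j + 1)) - x ≠ 0) (hi : i < N) :
    b i * z (i + 1) = -(q i * (x * (G i * y i))) := by
  refine Nat.decreasingInduction' (P := fun j => b j * z (j + 1) = -(q j * (x * (G j * y j))))
    (fun j hjN hij ih => ?_) (Nat.le_sub_one_of_lt hi) ?_
  · have hj : j + 1 < N := by omega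
    have hDz : (q (j + 1) * (1 - x * G (j + 1)) - x) * z (j + 1)
        = -((q (j + 1) * G (j + 1) + 1) * x * (b j * y j)) := by
      linear_combination a (j + 1) * hy j hij hj - a (j + 1) * ih
        - (q (j + 1) * x * G (j + 1) + x) * hz j hj - z (j + 1) * haq (j + 1) hj
    refine mul_left_cancel₀ (hD j hj) ?_
    linear_combination b j * hDz + x * y j * hG j hj
      - (q (j + 1) * G (j + 1) + 1) * x * y j * hbe j hj
  · rw [Nat.sub_add_cancel (by omega), hz_last, hG_last]
    ring

/-- The generating function `∑ f (r + 1) Xʳ` of the values `f 1, f 2, …`; the value `f 0` is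
dropped because the families of the theorem are only specified for positive superscripts. -/
noncomputable def tailSeries {R : Type*} [Semiring R] (f : ℕ → R) : R⟦X⟧ :=
  PowerSeries.mk fun r => f (r + 1)

@[simp]
lemma coeff_tailSeries {R : Type*} [Semiring R] (f : ℕ → R) (n : ℕ) :
    coeff n (tailSeries f) = f (n + 1) :=
  coeff_mk n _

lemma coeff_tailSeries_mul {R : Type*} [Semiring R] (f h : ℕ → R) (n : ℕ) :
    coeff n (tailSeries f * tailSeries h) = ∑ k ∈ Finset.Icc 1 (n + 1), f k * h (n + 2 - k) := by
  rw [coeff_mul, Finset.Nat.sum_antidiagonal_eq_sum_range_succ_mk,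
    ← Finset.Ico_add_one_right_eq_Icc, Finset.sum_Ico_eq_sum_range]
  refine Finset.sum_congr rfl fun k hk => ?_
  have hkn : k ≤ n := Nat.lt_succ_iff.mp (Finset.mem_range.mp hk)
  rw [coeff_tailSeries, coeff_tailSeries, add_comm 1 k, show n + 2 - (k + 1) = n - k + 1 by omega]

/-- The recurrence that defines the auxiliary family `g r i` from the ratios `e i / q i` and the
diagonal `v₁` of the first inverse power. The reversed family of the other Gram matrix satisfies it
with all sequences reversed. -/
structure IsEliminationFamily {K : Type*} [Field K] (N : ℕ) (q e v₁ : ℕ → K) (g : ℕ → ℕ → K) :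
    Prop where
  last : ∀ r, 1 ≤ r → g r (N - 1) = 0
  one : ∀ i, i + 1 < N → g 1 i = e i / q i * v₁ (i + 1)
  succ : ∀ r, 2 ≤ r → ∀ i, i + 1 < N →
    g r i = e i / q i * g r (i + 1) + 1 / q (i + 1) * g (r - 1) i
      + ∑ k ∈ Finset.Icc 1 (r - 1), g k (i + 1) * g (r - k) i

namespace IsEliminationFamily

variable {K : Type*} [Field K] {N : ℕ} {q e v₁ : ℕ → K} {g : ℕ → ℕ → K}

lemma tailSeries_riccati (h : IsEliminationFamily N q e v₁ g) (hq : ∀ i < N, q i ≠ 0)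
    (hdiag : ∀ i < N, q i * v₁ i = q i * g 1 i + 1) {j : ℕ} (hj : j + 1 < N) :
    C (q j) * (tailSeries (g · j) * (C (q (j + 1)) * (1 - X * tailSeries (g · (j + 1))) - X))
      = C (e j) * (C (q (j + 1)) * tailSeries (g · (j + 1)) + 1) := by
  set G : ℕ → K⟦X⟧ := fun i => tailSeries (g · i) with hG
  have hqj := hq j (by omega)
  have hqj' := hq (j + 1) hj
  suffices C (q j * q (j + 1)) * (G j - X * (G (j + 1) * G j)) - C (q j) * (X * G j)
      = C (e j * q (j + 1)) * G (j + 1) + C (e j) by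
    simp only [map_mul] at this
    linear_combination this
  ext r
  cases r with
  | zero =>
    have hone : q j * g 1 j = e j * v₁ (j + 1) := by
      rw [h.one j hj]
      field_simp
    simp only [map_sub, map_add, coeff_C_mul, coeff_zero_X_mul, coeff_zero_C, hG,
      coeff_tailSeries, zero_add]
    linear_combination q (j + 1) * hone + e j * hdiag (j + 1) hj
  | succ r =>
    have hsucc := h.succ (r + 2) (by omega) j hj
    simp only [map_sub, map_add, coeff_C_mul, coeff_succ_X_mul, coeff_succ_C, hG,
      coeff_tailSeries_mul, coeff_tailSeries]
    rw [show r + 2 - 1 = r + 1 by omega] at hsucc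
    rw [hsucc]
    field_simp
    ring

lemma tailSeries_last (h : IsEliminationFamily N q e v₁ g) : tailSeries (g · (N - 1)) = 0 := by
  ext r
  rw [coeff_tailSeries, h.last (r + 1) (by omega), map_zero]

end IsEliminationFamily

end Elimination

section Recurrence

open PowerSeries

variable {K : Type*} [Field K] {N : ℕ} {a b q e : ℕ → K} {B : Matrix (Fin N) (Fin N) K}
  {g : ℕ → ℕ → K}

/-- The `(j, i)` entry of the formal resolvent `∑ (BBᵀ)^{-(s+1)} Xˢ = (BBᵀ - X)⁻¹`. The column
comes first, so that fixing it leaves the vector on which the elimination acts. -/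
noncomputable def resolventEntry (B : Matrix (Fin N) (Fin N) K) (i j : ℕ) : K⟦X⟧ :=
  tailSeries fun s => zeroExtend ((B * Bᵀ)⁻¹ ^ s) j i

/-- The `(j, i)` entry of `Bᵀ (BBᵀ - X)⁻¹`, with the column first as in `resolventEntry`; its
coefficients are the entries of the transposed intertwiners. -/
noncomputable def intertwinerSeries (B : Matrix (Fin N) (Fin N) K) (i j : ℕ) : K⟦X⟧ :=
  tailSeries fun s => zeroExtend (intertwiner B s)ᵀ j i

lemma intertwinerSeries_succ (hBab : B = upperBidiagonal N a b) (hB : IsUnit B.det) (i : ℕ) {j : ℕ}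
    (hj : j + 1 < N) :
    intertwinerSeries B i (j + 1)
      = C (a (j + 1)) * resolventEntry B i (j + 1) + C (b j) * resolventEntry B i j := by
  ext s
  simp only [intertwinerSeries, resolventEntry, map_add, coeff_C_mul, coeff_tailSeries]
  rw [transpose_intertwiner hB, hBab, zeroExtend_transpose_upperBidiagonal_mul a b _ hj]

lemma bidiagonal_intertwinerSeries (hBab : B = upperBidiagonal N a b) (hB : IsUnit B.det)
    {i j : ℕ} (hij : i < j) (hj : j < N) :
    C (a j) * intertwinerSeries B i j + C (b j) * intertwinerSeries B i (j + 1)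
      = X * resolventEntry B i j := by
  ext s
  have hcoeff : coeff s
      (C (a j) * intertwinerSeries B i j + C (b j) * intertwinerSeries B i (j + 1))
        = zeroExtend ((B * Bᵀ)⁻¹ ^ s) j i := by
    simp only [intertwinerSeries, map_add, coeff_C_mul, coeff_tailSeries]
    rw [← mul_transpose_intertwiner_succ hB s, hBab, zeroExtend_upperBidiagonal_mul a b _ hj]
  rw [hcoeff]
  cases s with
  | zero =>
    have hne : (⟨j, hj⟩ : Fin N) ≠ ⟨i, hij.trans hj⟩ := Fin.mk_lt_mk.mpr hij |>.ne'
    rw [pow_zero, zeroExtend_of_lt _ hj (hij.trans hj), coeff_zero_X_mul, one_apply_ne hne]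
  | succ s => rw [coeff_succ_X_mul, resolventEntry, coeff_tailSeries]

lemma intertwinerSeries_last (B : Matrix (Fin N) (Fin N) K) (i : ℕ) :
    intertwinerSeries B i N = 0 := by
  ext s
  rw [intertwinerSeries, coeff_tailSeries, zeroExtend_of_le_left _ le_rfl, map_zero]

lemma IsEliminationFamily.mul_inv_diagonal (hBab : B = upperBidiagonal N a b)
    (hB : IsUnit B.det) (hq : ∀ i < N, q i ≠ 0) (haq : ∀ i < N, a i ^ 2 = q i)
    (hbe : ∀ i, i + 1 < N → b i ^ 2 = e i)
    (hg : IsEliminationFamily N q e (fun i => zeroExtend (Bᵀ * B)⁻¹ i i) g) {i : ℕ} (hi : i < N) :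
    q i * zeroExtend (Bᵀ * B)⁻¹ i i = q i * g 1 i + 1 := by
  have hdiag : 1 = q i * zeroExtend (Bᵀ * B)⁻¹ i i
      - b i ^ 2 * zeroExtend (Bᵀ * B)⁻¹ (i + 1) (i + 1) := by
    have h := zeroExtend_inv_pow_diagonal hBab hB 0 hi
    rw [pow_zero, zeroExtend_of_lt _ hi hi, one_apply_eq, zero_add, pow_one, hBab,
      zeroExtend_intertwiner_one_superdiagonal (hBab ▸ hB), mul_zero, mul_zero, add_zero,
      haq i hi, ← hBab] at h
    exact h
  by_cases hiN : i + 1 < N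
  · have := hq i hi
    rw [hg.one i hiN, ← hbe i hiN]
    field_simp
    linear_combination -hdiag
  · obtain rfl : i = N - 1 := by omega
    rw [zeroExtend_of_le_left _ (not_lt.mp hiN), mul_zero, sub_zero] at hdiag
    rw [hg.last 1 le_rfl, mul_zero, zero_add, hdiag]

lemma mul_superdiagonal_intertwiner (hBab : B = upperBidiagonal N a b)
    (hB : IsUnit B.det) (hq : ∀ i < N, q i ≠ 0) (haq : ∀ i < N, a i ^ 2 = q i)
    (hbe : ∀ i, i + 1 < N → b i ^ 2 = e i)
    (hg : IsEliminationFamily N q e (fun i => zeroExtend (Bᵀ * B)⁻¹ i i) g) (s : ℕ) {i : ℕ}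
    (hi : i < N) :
    b i * zeroExtend (intertwiner B (s + 2)) i (i + 1)
      = -(q i * ∑ k ∈ Finset.Icc 1 (s + 1),
          g k i * zeroExtend ((B * Bᵀ)⁻¹ ^ (s + 2 - k)) i i) := by
  have hD (j : ℕ) (hj : j + 1 < N) :
      C (q (j + 1)) * (1 - X * tailSeries (g · (j + 1))) - X ≠ 0 := fun h =>
    hq (j + 1) hj (by simpa using congrArg constantCoeff h)
  have helim : C (b i) * intertwinerSeries B i (i + 1)
      = -(C (q i) * (X * (tailSeries (g · i) * resolventEntry B i i))) :=
    superdiagonal_elimination (a := fun j => C (a j)) (b := fun j => C (b j))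
      (q := fun j => C (q j)) (e := fun j => C (e j)) (G := fun j => tailSeries (g · j))
      (y := resolventEntry B i) (z := intertwinerSeries B i)
      (fun j hj => by rw [← map_pow, haq j hj]) (fun j hj => by rw [← map_pow, hbe j hj])
      (fun j hj => intertwinerSeries_succ hBab hB i hj)
      (fun j hij hj => bidiagonal_intertwinerSeries hBab hB (Nat.lt_succ_of_le hij) hj)
      (intertwinerSeries_last B i) hg.tailSeries_last
      (fun j hj => hg.tailSeries_riccati hq
        (fun k hk => hg.mul_inv_diagonal hBab hB hq haq hbe hk) hj) hD hi
  have hcoeff := congrArg (coeff (s + 1)) helim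
  rw [map_neg, coeff_C_mul, coeff_C_mul, coeff_succ_X_mul, resolventEntry, coeff_tailSeries_mul,
    intertwinerSeries, coeff_tailSeries, zeroExtend_transpose] at hcoeff
  exact hcoeff

lemma inv_pow_diagonal_last (hN : 0 < N) (hBab : B = upperBidiagonal N a b) (hB : IsUnit B.det)
    (hq : ∀ i < N, q i ≠ 0) (haq : ∀ i < N, a i ^ 2 = q i) (s : ℕ) :
    zeroExtend ((Bᵀ * B)⁻¹ ^ (s + 1)) (N - 1) (N - 1)
      = 1 / q (N - 1) * zeroExtend ((B * Bᵀ)⁻¹ ^ s) (N - 1) (N - 1) := by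
  have hlt : N - 1 < N := by omega
  have hle : N ≤ N - 1 + 1 := by omega
  have := hq (N - 1) hlt
  rw [zeroExtend_inv_pow_diagonal hBab hB s hlt, haq _ hlt, zeroExtend_of_le_left _ hle,
    zeroExtend_of_le_right _ _ hle]
  field_simp
  ring

lemma inv_pow_diagonal_recurrence (hBab : B = upperBidiagonal N a b) (hB : IsUnit B.det)
    (hq : ∀ i < N, q i ≠ 0) (haq : ∀ i < N, a i ^ 2 = q i) (hbe : ∀ i, i + 1 < N → b i ^ 2 = e i)
    (hg : IsEliminationFamily N q e (fun i => zeroExtend (Bᵀ * B)⁻¹ i i) g) (s : ℕ) {i : ℕ}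
    (hi : i + 1 < N) :
    zeroExtend ((Bᵀ * B)⁻¹ ^ (s + 2)) i i
      = e i / q i * zeroExtend ((Bᵀ * B)⁻¹ ^ (s + 2)) (i + 1) (i + 1)
        + 1 / q i * zeroExtend ((B * Bᵀ)⁻¹ ^ (s + 1)) i i
        + 2 * ∑ k ∈ Finset.Icc 1 (s + 1),
          g k i * zeroExtend ((B * Bᵀ)⁻¹ ^ (s + 2 - k)) i i := by
  have hiN : i < N := by omega
  have := hq i hiN
  rw [zeroExtend_inv_pow_diagonal hBab hB (s + 1) hiN,
    mul_superdiagonal_intertwiner hBab hB hq haq hbe hg s hiN, haq i hiN, hbe i hi]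
  field_simp
  ring

theorem inv_gram_diagonal_recurrence (hN : 0 < N) (hBab : B = upperBidiagonal N a b)
    (hq : ∀ i < N, q i ≠ 0) (haq : ∀ i < N, a i ^ 2 = q i) (hbe : ∀ i, i + 1 < N → b i ^ 2 = e i)
    {M : ℕ} {v w : ℕ → ℕ → K}
    (hv : ∀ s, 1 ≤ s → s ≤ M → ∀ i (hi : i < N), v s i = ((Bᵀ * B)⁻¹ ^ s) ⟨i, hi⟩ ⟨i, hi⟩)
    (hw : ∀ s, 1 ≤ s → s ≤ M → ∀ i (hi : i < N), w s i = ((B * Bᵀ)⁻¹ ^ s) ⟨i, hi⟩ ⟨i, hi⟩)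
    (hg : IsEliminationFamily N q e (v 1) g) {s : ℕ} (hs : 2 ≤ s) (hsM : s ≤ M) :
    v s (N - 1) = 1 / q (N - 1) * w (s - 1) (N - 1) ∧
      ∀ i, i + 1 < N →
        v s i = e i / q i * v s (i + 1) + 1 / q i * w (s - 1) i
          + 2 * ∑ k ∈ Finset.Icc 1 (s - 1), g k i * w (s - k) i := by
  have hB : IsUnit B.det := hBab ▸ isUnit_det_upperBidiagonal
    (fun i hi => (isUnit_pow_iff two_ne_zero).mp (haq i hi ▸ (hq i hi).isUnit)) b
  have hv' (t : ℕ) (ht : 1 ≤ t) (htM : t ≤ M) (i : ℕ) (hi : i < N) :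
      v t i = zeroExtend ((Bᵀ * B)⁻¹ ^ t) i i :=
    (hv t ht htM i hi).trans (zeroExtend_of_lt _ hi hi).symm
  have hw' (t : ℕ) (ht : 1 ≤ t) (htM : t ≤ M) (i : ℕ) (hi : i < N) :
      w t i = zeroExtend ((B * Bᵀ)⁻¹ ^ t) i i :=
    (hw t ht htM i hi).trans (zeroExtend_of_lt _ hi hi).symm
  have hg' : IsEliminationFamily N q e (fun i => zeroExtend (Bᵀ * B)⁻¹ i i) g :=
    { hg with one i hi := by rw [hg.one i hi, hv' 1 le_rfl (by omega) _ hi, pow_one] }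
  obtain ⟨t, rfl⟩ : ∃ t, s = t + 2 := ⟨s - 2, by omega⟩
  simp only [show t + 2 - 1 = t + 1 by omega]
  constructor
  · rw [hv' _ (by omega) hsM _ (by omega), hw' _ (by omega) (by omega) _ (by omega)]
    exact inv_pow_diagonal_last hN hBab hB hq haq (t + 1)
  · intro i hi
    have hsum : ∑ k ∈ Finset.Icc 1 (t + 1), g k i * w (t + 2 - k) i
        = ∑ k ∈ Finset.Icc 1 (t + 1), g k i * zeroExtend ((B * Bᵀ)⁻¹ ^ (t + 2 - k)) i i := by
      refine Finset.sum_congr rfl fun k hk => ?_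
      rw [Finset.mem_Icc] at hk
      rw [hw' _ (by omega) (by omega) _ (by omega)]
    rw [hsum, hv' _ (by omega) hsM _ (by omega), hv' _ (by omega) hsM _ hi,
      hw' _ (by omega) (by omega) _ (by omega)]
    exact inv_pow_diagonal_recurrence hBab hB hq haq hbe hg' t hi

end Recurrence

section Reversal

lemma submatrix_inv_pow {n R : Type*} [Fintype n] [DecidableEq n] [CommRing R] (P : Matrix n n R)
    (σ : n ≃ n) (s : ℕ) : (P.submatrix σ σ)⁻¹ ^ s = (P⁻¹ ^ s).submatrix σ σ := by
  rw [inv_submatrix_equiv]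
  exact (map_pow (reindexAlgEquiv R R σ.symm) P⁻¹ s).symm

variable {K : Type*} [Field K] {N : ℕ} {a b q e : ℕ → K} {B : Matrix (Fin N) (Fin N) K}

theorem inv_gram_diagonal_recurrence_reverse (hN : 0 < N) (hBab : B = upperBidiagonal N a b)
    (hq : ∀ i < N, q i ≠ 0) (haq : ∀ i < N, a i ^ 2 = q i) (hbe : ∀ i, i + 1 < N → b i ^ 2 = e i)
    {M : ℕ} {v w : ℕ → ℕ → K}
    (hv : ∀ s, 1 ≤ s → s ≤ M → ∀ i (hi : i < N), v s i = ((Bᵀ * B)⁻¹ ^ s) ⟨i, hi⟩ ⟨i, hi⟩)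
    (hw : ∀ s, 1 ≤ s → s ≤ M → ∀ i (hi : i < N), w s i = ((B * Bᵀ)⁻¹ ^ s) ⟨i, hi⟩ ⟨i, hi⟩)
    {g : ℕ → ℕ → K}
    (hg : IsEliminationFamily N (fun i => q (N - (i + 1))) (fun i => e (N - (i + 2)))
      (fun i => w 1 (N - (i + 1))) fun r i => g r (N - (i + 1)))
    {s : ℕ} (hs : 2 ≤ s) (hsM : s ≤ M) :
    w s 0 = 1 / q 0 * v (s - 1) 0 ∧
      ∀ i, 0 < i → i < N →
        w s i = e (i - 1) / q i * w s (i - 1) + 1 / q i * v (s - 1) i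
          + 2 * ∑ k ∈ Finset.Icc 1 (s - 1), g k i * v (s - k) i := by
  obtain ⟨hlast, hrec⟩ := inv_gram_diagonal_recurrence
    (B := Bᵀ.submatrix Fin.revPerm Fin.revPerm) hN
    (by rw [hBab, transpose_upperBidiagonal_submatrix_rev])
    (fun i hi => hq _ (by omega)) (fun i hi => haq _ (by omega))
    (fun i hi => by rw [hbe _ (by omega)])
    (M := M) (v := fun s i => w s (N - (i + 1))) (w := fun s i => v s (N - (i + 1)))
    (fun s h1 h2 i hi => by
      rw [transpose_submatrix, transpose_transpose, submatrix_mul_equiv, submatrix_inv_pow]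
      exact hw s h1 h2 _ (by omega))
    (fun s h1 h2 i hi => by
      rw [transpose_submatrix, transpose_transpose, submatrix_mul_equiv, submatrix_inv_pow]
      exact hv s h1 h2 _ (by omega)) hg hs hsM
  constructor
  · simpa only [Nat.sub_add_cancel hN, Nat.sub_self] using hlast
  · intro i hi hiN
    have h := hrec (N - (i + 1)) (by omega)
    simpa only [show N - (N - (i + 1) + 1) = i by omega,
      show N - (N - (i + 1) + 1 + 1) = i - 1 by omega,
      show N - (N - (i + 1) + 2) = i - 1 by omega] using h

lemma isEliminationFamily_reverse {w₁ : ℕ → K} {g : ℕ → ℕ → K} (hN : 0 < N)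
    (hg_first : ∀ r, 1 ≤ r → g r 0 = 0)
    (hg_one : ∀ i, 0 < i → i < N → g 1 i = e (i - 1) / q i * w₁ (i - 1))
    (hg_succ : ∀ r, 2 ≤ r → ∀ i, 0 < i → i < N →
      g r i = e (i - 1) / q i * g r (i - 1) + 1 / q (i - 1) * g (r - 1) i
        + ∑ k ∈ Finset.Icc 1 (r - 1), g k (i - 1) * g (r - k) i) :
    IsEliminationFamily N (fun i => q (N - (i + 1))) (fun i => e (N - (i + 2)))
      (fun i => w₁ (N - (i + 1))) fun r i => g r (N - (i + 1)) where
  last r hr := by rw [Nat.sub_add_cancel hN, Nat.sub_self, hg_first r hr]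
  one i hi := hg_one (N - (i + 1)) (by omega) (by omega)
  succ r hr i hi := hg_succ r hr (N - (i + 1)) (by omega) (by omega)

end Reversal

theorem stmt_3_general {K : Type*} [Field K] {N : ℕ} (hN : 0 < N) (a b q e : ℕ → K)
    (hq : ∀ i < N, q i ≠ 0) (haq : ∀ i < N, a i ^ 2 = q i) (hbe : ∀ i, i + 1 < N → b i ^ 2 = e i)
    (B : Matrix (Fin N) (Fin N) K)
    (hB : ∀ i j : Fin N, B i j =
      if (j : ℕ) = (i : ℕ) then a i else if (j : ℕ) = (i : ℕ) + 1 then b i else 0)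
    (M : ℕ) (v w : ℕ → ℕ → K)
    (hv : ∀ s, 1 ≤ s → s ≤ M → ∀ i (hi : i < N), v s i = ((Bᵀ * B)⁻¹ ^ s) ⟨i, hi⟩ ⟨i, hi⟩)
    (hw : ∀ s, 1 ≤ s → s ≤ M → ∀ i (hi : i < N), w s i = ((B * Bᵀ)⁻¹ ^ s) ⟨i, hi⟩ ⟨i, hi⟩)
    (g gt : ℕ → ℕ → K)
    (hgN : ∀ r, 1 ≤ r → g r (N - 1) = 0)
    (hg1 : ∀ i, i + 1 < N → g 1 i = e i / q i * v 1 (i + 1))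
    (hgr : ∀ r, 2 ≤ r → ∀ i, i + 1 < N →
      g r i = e i / q i * g r (i + 1) + 1 / q (i + 1) * g (r - 1) i
        + ∑ k ∈ Finset.Icc 1 (r - 1), g k (i + 1) * g (r - k) i)
    (hgt0 : ∀ r, 1 ≤ r → gt r 0 = 0)
    (hgt1 : ∀ i, 0 < i → i < N → gt 1 i = e (i - 1) / q i * w 1 (i - 1))
    (hgtr : ∀ r, 2 ≤ r → ∀ i, 0 < i → i < N →
      gt r i = e (i - 1) / q i * gt r (i - 1) + 1 / q (i - 1) * gt (r - 1) i
        + ∑ k ∈ Finset.Icc 1 (r - 1), gt k (i - 1) * gt (r - k) i) :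
    ∀ s, 2 ≤ s → s ≤ M →
      v s (N - 1) = 1 / q (N - 1) * w (s - 1) (N - 1) ∧
      w s 0 = 1 / q 0 * v (s - 1) 0 ∧
      (∀ i, i + 1 < N →
        v s i = e i / q i * v s (i + 1) + 1 / q i * w (s - 1) i
          + 2 * ∑ k ∈ Finset.Icc 1 (s - 1), g k i * w (s - k) i) ∧
      (∀ i, 0 < i → i < N →
        w s i = e (i - 1) / q i * w s (i - 1) + 1 / q i * v (s - 1) i
          + 2 * ∑ k ∈ Finset.Icc 1 (s - 1), gt k i * v (s - k) i) := by
  intro s hs hsM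
  have hBab : B = upperBidiagonal N a b := ext hB
  obtain ⟨hv_last, hv_rec⟩ :=
    inv_gram_diagonal_recurrence hN hBab hq haq hbe hv hw ⟨hgN, hg1, hgr⟩ hs hsM
  obtain ⟨hw_first, hw_rec⟩ := inv_gram_diagonal_recurrence_reverse hN hBab hq haq hbe hv hw
    (isEliminationFamily_reverse hN hgt0 hgt1 hgtr) hs hsM
  exact ⟨hv_last, hw_first, hv_rec, hw_rec⟩

/-- the subtraction-free recurrence of Yamashita–Kimura–Nakamura for the
diagonal entries of `(BᵀB)^{-s}` and `(BBᵀ)^{-s}`, `s = 2, …, M`. Indices are 0-based: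
the paper's 1-based `v_i^{(s)}` is `v s (i-1)`; `B̌_i = 1/q_{i}` is `1 / q (i-1)`;
`F_i = e_i/q_i` is `e (i-1) / q (i-1)`; `F̃_i = e_{i-1}/q_i` is `e (i-2) / q (i-1)`. -/
theorem stmt_3 (N : ℕ) (hN : 0 < N) (q e : ℕ → ℝ)
    (hq : ∀ i, i < N → 0 < q i) (he : ∀ i, i + 1 < N → 0 < e i)
    (B : Matrix (Fin N) (Fin N) ℝ)
    (hB : ∀ i j : Fin N, B i j =
      if (j : ℕ) = (i : ℕ) then Real.sqrt (q i)
      else if (j : ℕ) = (i : ℕ) + 1 then Real.sqrt (e i) else 0)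
    (M : ℕ) (hM : 2 ≤ M)
    (v w : ℕ → ℕ → ℝ)
    (hv : ∀ s, 1 ≤ s → s ≤ M → ∀ i (hi : i < N),
      v s i = ((Bᵀ * B)⁻¹ ^ s) ⟨i, hi⟩ ⟨i, hi⟩)
    (hw : ∀ s, 1 ≤ s → s ≤ M → ∀ i (hi : i < N),
      w s i = ((B * Bᵀ)⁻¹ ^ s) ⟨i, hi⟩ ⟨i, hi⟩)
    (g gt : ℕ → ℕ → ℝ)
    (hgN : ∀ r, 1 ≤ r → g r (N - 1) = 0)
    (hg1 : ∀ i, i + 1 < N → g 1 i = e i / q i * v 1 (i + 1))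
    (hgr : ∀ r, 2 ≤ r → ∀ i, i + 1 < N →
      g r i = e i / q i * g r (i + 1) + 1 / q (i + 1) * g (r - 1) i
        + ∑ k ∈ Finset.Icc 1 (r - 1), g k (i + 1) * g (r - k) i)
    (hgt1' : ∀ r, 1 ≤ r → gt r 0 = 0)
    (hgt1 : ∀ i, 0 < i → i < N → gt 1 i = e (i - 1) / q i * w 1 (i - 1))
    (hgtr : ∀ r, 2 ≤ r → ∀ i, 0 < i → i < N →
      gt r i = e (i - 1) / q i * gt r (i - 1) + 1 / q (i - 1) * gt (r - 1) i
        + ∑ k ∈ Finset.Icc 1 (r - 1), gt k (i - 1) * gt (r - k) i) :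
    ∀ s, 2 ≤ s → s ≤ M →
      v s (N - 1) = 1 / q (N - 1) * w (s - 1) (N - 1) ∧
      w s 0 = 1 / q 0 * v (s - 1) 0 ∧
      (∀ i, i + 1 < N →
        v s i = e i / q i * v s (i + 1) + 1 / q i * w (s - 1) i
          + 2 * ∑ k ∈ Finset.Icc 1 (s - 1), g k i * w (s - k) i) ∧
      (∀ i, 0 < i → i < N →
        w s i = e (i - 1) / q i * w s (i - 1) + 1 / q i * v (s - 1) i
          + 2 * ∑ k ∈ Finset.Icc 1 (s - 1), gt k i * v (s - k) i) :=
  stmt_3_general hN (fun i => Real.sqrt (q i)) (fun i => Real.sqrt (e i)) q e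
    (fun i hi => (hq i hi).ne') (fun i hi => Real.sq_sqrt (hq i hi).le)
    (fun i hi => Real.sq_sqrt (he i hi).le) B hB M v w hv hw g gt hgN hg1 hgr hgt1' hgt1 hgtr
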